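/- Upper bound on the minimum time-space product: limsup_{n→∞} log₂( TS(n) / n ) / ( 2·√(log₂ n) ) ≤ 1. (In particular TS(n) ≤ 2^{2√(log₂ n)·(1+o(1))}·n as n → ∞.) -/

import Mathlib

/-!
The bound comes from Bennett's `k`-ary strategy. To pebble `n ≤ k ^ (l + 1)` squares, cut them into
at most `k` blocks of length at most `k ^ l`, pebble the ends of the blocks one after another with
the level-`l` strategy, and then remove all block ends but the last one by running the level-`l`
strategies backwards in the opposite order. Each block is traversed at most twice and at most `k`
further pebbles are in use, so by induction `n ≤ k ^ l` squares can be pebbled in at most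
`2 ^ l * n` moves with `l * k + 1` pebbles (`canPebble_level`). The blocks are peeled off one at a
time with the recursion `F n (S + 1) ≤ F m (S + 1) + F (n - m) S + F m S`, proved in the relative
form `CanPebble.combine`.

Hence `TS n / n ≤ (l * k + 1) * 2 ^ l` as soon as `n ≤ k ^ l`. With `s = √(log₂ n)`, `l = ⌈s⌉` and
`k = ⌈2 ^ s⌉` this yields `log₂ (TS n / n) ≤ 2 s + log₂ (s + 1) + 3` (`logb_TS_le`), and dividing
by `2 s` gives the claim.
-/

/-- A solution of Bennett's pebble game on `n` squares: a sequence of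
configurations `c 0, …, c T` (subsets of `{1, …, n}`), starting empty,
ending with exactly one pebble on square `n`, where consecutive
configurations differ in exactly one square `i`, and a pebble may be added
to or removed from square `i` only if `i = 1` or square `i - 1` is pebbled. -/
structure PebbleSolution (n : ℕ) where
  T : ℕ
  c : ℕ → Finset ℕ
  subset : ∀ j ≤ T, c j ⊆ Finset.Icc 1 n
  init : c 0 = ∅
  final : c T = {n}
  move : ∀ j, 1 ≤ j → j ≤ T → ∃ i,
    symmDiff (c (j - 1)) (c j) = {i} ∧ (i = 1 ∨ i - 1 ∈ c (j - 1))

/-- The space used by a solution: the maximum number of pebbles on the board. -/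
def PebbleSolution.space {n : ℕ} (s : PebbleSolution n) : ℕ :=
  (Finset.range (s.T + 1)).sup fun j => (s.c j).card

/-- `F n S` is the minimum number of moves of a solution of the pebble game on
`n` squares using at most `S` pebbles, or `⊤` if no such solution exists. -/
noncomputable def F (n S : ℕ) : ℕ∞ :=
  sInf {t : ℕ∞ | ∃ s : PebbleSolution n, s.space ≤ S ∧ t = (s.T : ℕ∞)}

/-- `Δ n S = F (n+1) S - F n S` for `n ≥ 1` when `F (n+1) S` is finite;
`Δ n S = 0` for `n ≤ 0`; `Δ n S = ⊤` otherwise. -/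
noncomputable def Δ (n : ℤ) (S : ℕ) : ℕ∞ :=
  if n ≤ 0 then 0
  else if F (n.toNat + 1) S < ⊤ then F (n.toNat + 1) S - F n.toNat S
  else ⊤

/-- For `n ≥ 2` (and `S ≥ 2`), `mOpt n S` is the least `m` with `1 ≤ m ≤ n - 1`
minimizing `F m S + F m (S-1) + F (n-m) (S-1)`; `mOpt 0 S = mOpt 1 S = 0`. -/
noncomputable def mOpt (n S : ℕ) : ℕ :=
  if n ≤ 1 then 0
  else sInf {m : ℕ | 1 ≤ m ∧ m ≤ n - 1 ∧
    ∀ m', 1 ≤ m' → m' ≤ n - 1 →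
      F m S + F m (S - 1) + F (n - m) (S - 1) ≤
        F m' S + F m' (S - 1) + F (n - m') (S - 1)}

/-- `xk k S = min { n ≥ 1 : Δ n S > 2 ^ k }`. -/
noncomputable def xk (k S : ℕ) : ℕ :=
  sInf {n : ℕ | 1 ≤ n ∧ (2 : ℕ∞) ^ k < Δ (n : ℤ) S}

/-- The minimum time-space product `TS n = min_{S ≥ 1} S * F n S`. -/
noncomputable def TS (n : ℕ) : ℕ :=
  sInf {t : ℕ | ∃ S : ℕ, 1 ≤ S ∧ (t : ℕ∞) = (S : ℕ∞) * F n S}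

/-- The binary entropy function. -/
noncomputable def H (γ : ℝ) : ℝ :=
  -γ * Real.logb 2 γ - (1 - γ) * Real.logb 2 (1 - γ)

/-! ### Paths of configurations -/

/-- A legal move between two configurations on squares `1, …, N` that both hold at most `B`
pebbles. -/
def PebbleStep (N B : ℕ) (c d : Finset ℕ) : Prop :=
  c ⊆ Finset.Icc 1 N ∧ d ⊆ Finset.Icc 1 N ∧ c.card ≤ B ∧ d.card ≤ B ∧
    ∃ i, symmDiff c d = {i} ∧ (i = 1 ∨ i - 1 ∈ c)

lemma PebbleStep.symm {N B : ℕ} {c d : Finset ℕ} (h : PebbleStep N B c d) :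
    PebbleStep N B d c := by
  obtain ⟨hc, hd, hcB, hdB, i, hi, hi'⟩ := h
  refine ⟨hd, hc, hdB, hcB, i, by rw [symmDiff_comm, hi], ?_⟩
  rcases hi' with h1 | h1
  · exact Or.inl h1
  · right
    have hpos : 1 ≤ i := by
      have hmem : i ∈ symmDiff c d := by rw [hi]; simp
      rw [Finset.mem_symmDiff] at hmem
      rcases hmem with h | h
      · exact (Finset.mem_Icc.1 (hc h.1)).1
      · exact (Finset.mem_Icc.1 (hd h.1)).1
    by_contra hcon
    have hmem : i - 1 ∈ symmDiff c d := Finset.mem_symmDiff.2 (Or.inl ⟨h1, hcon⟩)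
    rw [hi, Finset.mem_singleton] at hmem
    omega

/-- `PebblePath N B t c d`: configuration `d` is reachable from `c` in exactly `t` legal moves on
squares `1, …, N`, never using more than `B` pebbles. -/
inductive PebblePath (N B : ℕ) : ℕ → Finset ℕ → Finset ℕ → Prop
  | refl (c : Finset ℕ) : PebblePath N B 0 c c
  | tail {t : ℕ} {c d e : Finset ℕ} (h : PebblePath N B t c d) (hs : PebbleStep N B d e) :
      PebblePath N B (t + 1) c e

lemma PebblePath.trans {N B t u : ℕ} {c d e : Finset ℕ} (h₁ : PebblePath N B t c d)
    (h₂ : PebblePath N B u d e) : PebblePath N B (t + u) c e := by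
  induction h₂ with
  | refl => exact h₁
  | tail _ hs ih => exact (ih h₁).tail hs

lemma PebblePath.symm {N B t : ℕ} {c d : Finset ℕ} (h : PebblePath N B t c d) :
    PebblePath N B t d c := by
  induction h with
  | refl c => exact .refl c
  | tail _ hs ih =>
    have h := ((PebblePath.refl _).tail hs.symm).trans ih
    rwa [zero_add, add_comm] at h

lemma PebblePath.exists_fun {N B t : ℕ} {c d : Finset ℕ} (h : PebblePath N B t c d) :
    ∃ f : ℕ → Finset ℕ, f 0 = c ∧ f t = d ∧ ∀ j < t, PebbleStep N B (f j) (f (j + 1)) := by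
  induction h with
  | refl c => exact ⟨fun _ => c, rfl, rfl, by simp⟩
  | @tail t c d e _ hs ih =>
    obtain ⟨f, h0, ht, hf⟩ := ih
    refine ⟨fun j => if j ≤ t then f j else e, by simpa using h0, by simp, fun j hj => ?_⟩
    rcases Nat.lt_succ_iff_lt_or_eq.1 hj with hj | rfl
    · have h1 : j ≤ t := hj.le
      have h2 : j + 1 ≤ t := hj
      simpa [h1, h2] using hf j hj
    · simpa [ht] using hs

/-! ### The recursive strategy -/

/-- Relative form of pebbling `n` squares in `t` moves with `S` pebbles: a pebble can be put on
square `a + n` starting from any configuration `C` in which square `a` is pebbled (or `a = 0`) and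
the squares `a + 1, …, a + n` are free, using at most `S` pebbles on top of those of `C`. Pebbles
beyond `a + n` are allowed, which makes it possible to run the strategy backwards below an already
pebbled square. -/
def CanPebble (n S t : ℕ) : Prop :=
  ∀ (N B a : ℕ) (C : Finset ℕ), C ⊆ Finset.Icc 1 N → (∀ x ∈ C, x ≤ a ∨ a + n < x) →
    a + n ≤ N → C.card + S ≤ B → (a = 0 ∨ a ∈ C) → PebblePath N B t C (insert (a + n) C)

lemma CanPebble.mono {n S S' t : ℕ} (h : CanPebble n S t) (hS : S ≤ S') : CanPebble n S' t :=
  fun N B a C hC hx hN hB ha => h N B a C hC hx hN (by omega) ha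

lemma canPebble_one : CanPebble 1 1 1 := by
  intro N B a C hC hx hN hB ha
  have hnot : a + 1 ∉ C := fun h => by have := hx _ h; omega
  refine (PebblePath.refl C).tail ⟨hC, ?_, by omega, ?_, a + 1, ?_, ?_⟩
  · exact Finset.insert_subset (Finset.mem_Icc.2 ⟨by omega, hN⟩) hC
  · rw [Finset.card_insert_of_notMem hnot]; exact hB
  · ext x
    simp only [Finset.mem_symmDiff, Finset.mem_insert, Finset.mem_singleton]
    constructor
    · tauto
    · rintro rfl; tauto
  · simpa using ha

/-- Pebble square `m`, pebble `r` further squares from there, and remove the pebble on square `m`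
by running a strategy backwards. -/
lemma CanPebble.combine {m r S t₁ t₂ t₃ : ℕ} (hr : 1 ≤ r) (hm : 1 ≤ m)
    (h₁ : CanPebble m (S + 1) t₁) (h₂ : CanPebble r S t₂) (h₃ : CanPebble m S t₃) :
    CanPebble (m + r) (S + 1) (t₁ + t₂ + t₃) := by
  intro N B a C hC hx hN hB ha
  have hcard (y : ℕ) : (insert y C).card + S ≤ B := by
    have := Finset.card_insert_le y C
    omega
  have p₁ : PebblePath N B t₁ C (insert (a + m) C) :=
    h₁ N B a C hC (fun x h => by have := hx x h; omega) (by omega) hB ha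
  have p₂ : PebblePath N B t₂ (insert (a + m) C)
      (insert (a + m + r) (insert (a + m) C)) := by
    refine h₂ N B (a + m) _ ?_ ?_ (by omega) (hcard _) (Or.inr (Finset.mem_insert_self _ _))
    · exact Finset.insert_subset (Finset.mem_Icc.2 ⟨by omega, by omega⟩) hC
    · intro x h
      rcases Finset.mem_insert.1 h with rfl | h
      · exact Or.inl le_rfl
      · have := hx x h; omega
  have p₃ : PebblePath N B t₃ (insert (a + (m + r)) C)
      (insert (a + m) (insert (a + (m + r)) C)) := by
    refine h₃ N B a _ ?_ ?_ (by omega) (hcard _) (ha.imp id (Finset.mem_insert_of_mem))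
    · exact Finset.insert_subset (Finset.mem_Icc.2 ⟨by omega, by omega⟩) hC
    · intro x h
      rcases Finset.mem_insert.1 h with rfl | h
      · omega
      · have := hx x h; omega
  rw [Finset.insert_comm, add_assoc a m r] at p₂
  exact (p₁.trans p₂).trans p₃.symm

/-- One level of the `k`-ary strategy: if blocks of length at most `M` cost at most `c` moves per
square with `S + 1` pebbles, then `j` such blocks cost at most `2 * c` moves per square with
`S + j` pebbles. -/
lemma canPebble_blocks {M S c : ℕ} (hM : 1 ≤ M)
    (h : ∀ n, 1 ≤ n → n ≤ M → ∃ t ≤ c * n, CanPebble n (S + 1) t) (j : ℕ) :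
    ∀ n, 1 ≤ n → n ≤ (j + 1) * M → ∃ t ≤ 2 * c * n, CanPebble n (S + (j + 1)) t := by
  induction j with
  | zero =>
    intro n hn hnM
    obtain ⟨t, ht, hp⟩ := h n hn (by simpa using hnM)
    exact ⟨t, by nlinarith, hp⟩
  | succ j ih =>
    intro n hn hnM
    by_cases hle : n ≤ M
    · obtain ⟨t, ht, hp⟩ := h n hn hle
      exact ⟨t, by nlinarith, hp.mono (by omega)⟩
    · obtain ⟨r, rfl⟩ := Nat.exists_eq_add_of_le (not_le.1 hle).le
      obtain ⟨t₁, ht₁, hp₁⟩ := h M hM le_rfl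
      obtain ⟨t₂, ht₂, hp₂⟩ := ih r (by omega) (by nlinarith)
      exact ⟨t₁ + t₂ + t₁, by nlinarith,
        CanPebble.combine (S := S + (j + 1)) (by omega) hM (hp₁.mono (by omega)) hp₂
          (hp₁.mono (by omega))⟩

lemma canPebble_level {k : ℕ} (hk : 1 ≤ k) (l : ℕ) :
    ∀ n, 1 ≤ n → n ≤ k ^ l → ∃ t ≤ 2 ^ l * n, CanPebble n (l * k + 1) t := by
  induction l with
  | zero =>
    intro n hn hnk
    obtain rfl : n = 1 := by simp at hnk; omega
    exact ⟨1, by simp, by simpa using canPebble_one⟩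
  | succ l ih =>
    intro n hn hnk
    obtain ⟨j, rfl⟩ := Nat.exists_eq_add_of_le' hk
    obtain ⟨t, ht, hp⟩ := canPebble_blocks (Nat.one_le_pow _ _ hk) ih j n hn
      (by rwa [pow_succ, mul_comm] at hnk)
    exact ⟨t, by rwa [pow_succ, mul_comm (2 ^ l)], hp.mono (by nlinarith)⟩

/-! ### Bounds on `F` and `TS` -/

lemma CanPebble.F_le {n S t : ℕ} (h : CanPebble n S t) : F n S ≤ t := by
  have hp : PebblePath n S t ∅ {n} := by
    simpa using h n S 0 ∅ (by simp) (by simp) (by simp) (by simp) (Or.inl rfl)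
  obtain ⟨f, h0, ht, hf⟩ := hp.exists_fun
  have hall (j : ℕ) (hj : j ≤ t) : f j ⊆ Finset.Icc 1 n ∧ (f j).card ≤ S := by
    cases j with
    | zero => simp [h0]
    | succ j =>
      obtain ⟨_, hd, _, hS, _⟩ := hf j hj
      exact ⟨hd, hS⟩
  refine sInf_le ⟨⟨t, f, fun j hj => (hall j hj).1, h0, ht, fun j h1 hj => ?_⟩, ?_, rfl⟩
  · obtain ⟨_, _, _, _, hi⟩ := hf (j - 1) (by omega)
    rwa [Nat.sub_add_cancel h1] at hi
  · refine Finset.sup_le fun j hj => (hall j ?_).2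
    exact Nat.lt_succ_iff.1 (Finset.mem_range.1 hj)

lemma TS_le_of_F_le {n S t : ℕ} (hS : 1 ≤ S) (h : F n S ≤ t) : TS n ≤ S * t := by
  obtain ⟨u, hu⟩ := ENat.ne_top_iff_exists.1 (ne_top_of_le_ne_top (ENat.natCast_ne_top t) h)
  rw [← hu] at h
  have hut : u ≤ t := by exact_mod_cast h
  calc TS n ≤ S * u := Nat.sInf_le ⟨S, hS, by rw [← hu]; push_cast; rfl⟩
    _ ≤ S * t := Nat.mul_le_mul_left S hut

lemma TS_le {n k l : ℕ} (hn : 1 ≤ n) (hk : 1 ≤ k) (h : n ≤ k ^ l) :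
    TS n ≤ (l * k + 1) * (2 ^ l * n) := by
  obtain ⟨t, ht, hp⟩ := canPebble_level hk l n hn h
  exact (TS_le_of_F_le (by omega) hp.F_le).trans (Nat.mul_le_mul_left _ ht)

/-! ### Asymptotics -/

/-- The choice `l = ⌈s⌉`, `k = ⌈2 ^ s⌉` with `s = √(log₂ n)`. -/
lemma logb_TS_le {n : ℕ} (hn : 2 ≤ n) :
    Real.logb 2 ((TS n : ℝ) / (n : ℝ)) ≤
      2 * √(Real.logb 2 n) + Real.logb 2 (√(Real.logb 2 n) + 1) + 3 := by
  set s := √(Real.logb 2 n) with hs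
  have hnR : (2 : ℝ) ≤ n := by exact_mod_cast hn
  have hlog : 0 < Real.logb 2 n := Real.logb_pos (by norm_num) (by linarith)
  have hs0 : 0 < s := Real.sqrt_pos.2 hlog
  have hss : s * s = Real.logb 2 n := Real.mul_self_sqrt hlog.le
  have hlogs : 0 ≤ Real.logb 2 (s + 1) := Real.logb_nonneg (by norm_num) (by linarith)
  -- If `TS n` were `0`, the logarithm would take the value `0`, and the bound would still hold.
  rcases Nat.eq_zero_or_pos (TS n) with h0 | hpos
  · simp only [h0, Nat.cast_zero, zero_div, Real.logb_zero]; linarith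
  set l := ⌈s⌉₊
  set k := ⌈(2 : ℝ) ^ s⌉₊
  have h2s : (1 : ℝ) ≤ 2 ^ s := Real.one_le_rpow (by norm_num) hs0.le
  have hl : s ≤ l := Nat.le_ceil s
  have hl' : (l : ℝ) ≤ s + 1 := (Nat.ceil_lt_add_one hs0.le).le
  have hk : (2 : ℝ) ^ s ≤ k := Nat.le_ceil _
  have hk' : (k : ℝ) ≤ 2 * 2 ^ s := by
    have := (Nat.ceil_lt_add_one (a := (2 : ℝ) ^ s) (by linarith)).le
    linarith
  have hk1 : 1 ≤ k := by
    have : (1 : ℝ) ≤ k := h2s.trans hk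
    exact_mod_cast this
  have hl1 : 1 ≤ l := Nat.ceil_pos.2 hs0
  have hnk : n ≤ k ^ l := by
    have : (n : ℝ) ≤ (k : ℝ) ^ l := by
      calc (n : ℝ) = 2 ^ (s * s) := by
            rw [hss, Real.rpow_logb (by norm_num) (by norm_num) (by linarith)]
        _ ≤ 2 ^ (s * l) :=
            Real.rpow_le_rpow_of_exponent_le (by norm_num) (by nlinarith)
        _ = ((2 : ℝ) ^ s) ^ l := by rw [Real.rpow_mul (by norm_num), Real.rpow_natCast]
        _ ≤ (k : ℝ) ^ l := by gcongr
    exact_mod_cast this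
  have hTS : (TS n : ℝ) ≤ (l * k + 1) * (2 ^ l * n) := by
    exact_mod_cast TS_le (by omega) hk1 hnk
  have hl1R : (1 : ℝ) ≤ l := by exact_mod_cast hl1
  have hk1R : (1 : ℝ) ≤ k := by exact_mod_cast hk1
  have hbound : (TS n : ℝ) / n ≤ (s + 1) * 2 ^ (2 * s + 3) := by
    rw [div_le_iff₀ (by linarith)]
    have e1 : (l : ℝ) * k + 1 ≤ 2 * ((s + 1) * (2 * 2 ^ s)) := by
      have : (l : ℝ) * k ≤ (s + 1) * (2 * 2 ^ s) := by gcongr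
      nlinarith
    have e2 : (2 : ℝ) ^ l ≤ 2 ^ s * 2 := by
      calc (2 : ℝ) ^ l = 2 ^ (l : ℝ) := (Real.rpow_natCast _ _).symm
        _ ≤ 2 ^ (s + 1) := Real.rpow_le_rpow_of_exponent_le (by norm_num) hl'
        _ = 2 ^ s * 2 := by rw [Real.rpow_add (by norm_num), Real.rpow_one]
    have e3 : (2 : ℝ) ^ (2 * s + 3) = 2 ^ s * 2 ^ s * 8 := by
      rw [Real.rpow_add (by norm_num), two_mul, Real.rpow_add (by norm_num)]
      norm_num
    calc (TS n : ℝ) ≤ (l * k + 1) * (2 ^ l * n) := hTS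
      _ ≤ (2 * ((s + 1) * (2 * 2 ^ s))) * ((2 ^ s * 2) * n) := by gcongr
      _ = (s + 1) * 2 ^ (2 * s + 3) * n := by rw [e3]; ring
  calc Real.logb 2 ((TS n : ℝ) / n) ≤ Real.logb 2 ((s + 1) * 2 ^ (2 * s + 3)) :=
        Real.logb_le_logb_of_le (by norm_num) (by positivity) hbound
    _ = 2 * s + Real.logb 2 (s + 1) + 3 := by
        rw [Real.logb_mul (by positivity) (by positivity),
          Real.logb_rpow (by norm_num) (by norm_num)]
        ring

open Filter Topology in
lemma tendsto_bound :
    Tendsto (fun s : ℝ => (2 * s + Real.logb 2 (s + 1) + 3) / (2 * s)) atTop (𝓝 1) := by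
  have hlog : Tendsto (fun s : ℝ => Real.log (s + 1) / s) atTop (𝓝 0) := by
    have h := (Real.tendsto_pow_log_div_mul_add_atTop 1 (-1) 1 one_ne_zero).comp
      (tendsto_atTop_add_const_right atTop (1 : ℝ) tendsto_id)
    refine h.congr fun s => ?_
    simp
  have hinv : Tendsto (fun s : ℝ => s⁻¹) atTop (𝓝 0) := tendsto_inv_atTop_zero
  have h := ((hlog.const_mul (1 / (2 * Real.log 2))).const_add 1).add (hinv.const_mul (3 / 2))
  rw [mul_zero, mul_zero, add_zero, add_zero] at h
  refine h.congr' ?_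
  filter_upwards [eventually_gt_atTop 0] with s hs
  have : Real.log 2 ≠ 0 := (Real.log_pos (by norm_num)).ne'
  rw [Real.logb]
  field_simp

/-- Upper bound on the minimum time-space product:
`TS(n) ≤ 2^{2 √(log₂ n) (1 + o(1))} n`. -/
theorem TS_upper_bound :
    Filter.limsup (fun n : ℕ =>
        Real.logb 2 ((TS n : ℝ) / (n : ℝ)) / (2 * Real.sqrt (Real.logb 2 n)))
      Filter.atTop ≤ 1 := by
  have hs : Filter.Tendsto (fun n : ℕ => √(Real.logb 2 n)) Filter.atTop Filter.atTop :=
    Real.tendsto_sqrt_atTop.comp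
      ((Real.tendsto_logb_atTop (by norm_num)).comp tendsto_natCast_atTop_atTop)
  have hlim := tendsto_bound.comp hs
  rw [Filter.limsup_eq]
  -- The infimum is over a set containing every number above `1`. If that set had no lower bound,
  -- the real infimum would be `0` by convention, so a lower bound on `TS` is not needed.
  by_cases hbdd : BddBelow {a : ℝ | ∀ᶠ n : ℕ in Filter.atTop,
      Real.logb 2 ((TS n : ℝ) / (n : ℝ)) / (2 * Real.sqrt (Real.logb 2 n)) ≤ a}
  · refine le_of_forall_gt_imp_ge_of_dense fun a ha => csInf_le hbdd ?_
    filter_upwards [hlim.eventually_lt_const ha, Filter.eventually_ge_atTop 2] with n hn hn2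
    refine le_trans ?_ hn.le
    exact div_le_div_of_nonneg_right (logb_TS_le hn2) (by positivity)
  · rw [Real.sInf_of_not_bddBelow hbdd]
    exact zero_le_one
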